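/- arXiv:2107.04579 — 2 statements merged into one kernel-verified Lean document; each statement's English description precedes it below -/
import Mathlib

section
/- Let β ∈ F_{q^2} be nonzero and let s ∈ F_q satisfy #Occr(s, c(β)) = 1. Then q is odd if and only if s ≠ 0. -/
open scoped Classical

/-- The number of indices `i` (with `0 ≤ i ≤ q`) where `V i = s`. -/
noncomputable def occr {n : ℕ} {F : Type} (s : F) (V : Fin n → F) : ℕ :=
  (Finset.filter (fun i => V i = s) Finset.univ).card

/-- The Hamming weight of a vector: the number of its nonzero entries. -/
noncomputable def hwt {n : ℕ} {F : Type} [Zero F] (V : Fin n → F) : ℕ :=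
  (Finset.filter (fun i => V i ≠ 0) Finset.univ).card

/-- The codeword `c(β) = (Tr(β·γ^{(q−1)i}))_{i=0}^{q}` of the irreducible cyclic code
`C_{(q+1,q²)}`. -/
noncomputable def cw (q : ℕ) (F : Type) {K : Type} [Field F] [Field K] [Algebra F K]
    (γ : Kˣ) (β : K) : Fin (q + 1) → F :=
  fun i => Algebra.trace F K (β * (γ : K) ^ (((q : ℤ) - 1) * ((i : ℕ) : ℤ)))

/-!
Write `ζ = γ ^ (q - 1)`, a `(q + 1)`-th root of unity, so that `c(β)_i = Tr(β * ζ ^ i)` is periodic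
in `i` modulo `q + 1`. If `s` occurs only at `i` then `i + orderOf ζ ≡ i` modulo `q + 1`, so `ζ` is
primitive and its powers are all the `(q + 1)`-th roots of unity. Frobenius maps `x = β * ζ ^ i` to
some `β * ζ ^ j` of the same trace; hence `x` is fixed by Frobenius, `s = Tr x = 2 * x`, and this
vanishes exactly in characteristic two. For an extension of degree `n` the same argument gives
`s = n * x`.
-/

lemma occr_eq_one_iff_existsUnique {n : ℕ} {F : Type} (s : F) (V : Fin n → F) :
    occr s V = 1 ↔ ∃! i, V i = s := by
  simp [occr, Finset.card_eq_one_iff_existsUnique]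

section UniqueOccurrence

variable {α : Type*} {N : ℕ} {s : α}

lemma modEq_of_periodic_of_existsUnique {f : ℕ → α} (hf : f.Periodic N)
    (hs : ∃! i : Fin N, f i = s) {a b : ℕ} (ha : f a = s) (hb : f b = s) : a ≡ b [MOD N] := by
  have hN : 0 < N := hs.exists.choose.pos
  have residue_eq : (⟨a % N, Nat.mod_lt a hN⟩ : Fin N) = ⟨b % N, Nat.mod_lt b hN⟩ :=
    hs.unique ((hf.map_mod_nat a).trans ha) ((hf.map_mod_nat b).trans hb)
  exact congrArg Fin.val residue_eq

lemma periodic_comp_pow {M : Type*} [Monoid M] {ζ : M} (hζ : ζ ^ N = 1) (g : M → α) :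
    Function.Periodic (fun i : ℕ ↦ g (ζ ^ i)) N := fun i ↦ by
  simp only [pow_add, hζ, mul_one]

lemma isPrimitiveRoot_of_existsUnique {M : Type*} [CommMonoid M] {ζ : M} (hζ : ζ ^ N = 1)
    {g : M → α} (hs : ∃! i : Fin N, g (ζ ^ (i : ℕ)) = s) : IsPrimitiveRoot ζ N := by
  obtain ⟨i, hi⟩ := hs.exists
  have shifted : g (ζ ^ ((i : ℕ) + orderOf ζ)) = s := by rwa [pow_add, pow_orderOf_eq_one, mul_one]
  have hmod : (i : ℕ) + orderOf ζ ≡ i + 0 [MOD N] :=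
    modEq_of_periodic_of_existsUnique (periodic_comp_pow hζ g) hs shifted hi
  have hdvd : N ∣ orderOf ζ := Nat.modEq_zero_iff_dvd.mp hmod.add_left_cancel'
  exact IsPrimitiveRoot.iff_orderOf.mpr (Nat.dvd_antisymm (orderOf_dvd_of_pow_eq_one hζ) hdvd)

lemma existsUnique_rootOfUnity_of_existsUnique_pow {R : Type*} [CommRing R] [IsDomain R] {ζ : R}
    (hζ : ζ ^ N = 1) {g : R → α} (hs : ∃! i : Fin N, g (ζ ^ (i : ℕ)) = s) :
    ∃! ω : R, ω ^ N = 1 ∧ g ω = s := by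
  have hprim := isPrimitiveRoot_of_existsUnique hζ hs
  obtain ⟨i, hi, i_unique⟩ := hs
  have : NeZero N := ⟨i.pos.ne'⟩
  refine ⟨ζ ^ (i : ℕ), ⟨by rw [pow_right_comm, hζ, one_pow], hi⟩, ?_⟩
  rintro _ ⟨hω, hgω⟩
  obtain ⟨j, hj, rfl⟩ := hprim.eq_pow_of_pow_eq_one hω
  exact congrArg (fun k : Fin N ↦ ζ ^ (k : ℕ)) (i_unique ⟨j, hj⟩ hgω)

end UniqueOccurrence

section FiniteField

variable {F K : Type*} [Field F] [Fintype F] [Field K] [Finite K] [Algebra F K]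

lemma natCast_ne_zero_iff_coprime_card (n : ℕ) : (n : F) ≠ 0 ↔ (Fintype.card F).Coprime n := by
  obtain ⟨p, _, k, hp, hcard⟩ := FiniteField.card' F
  rw [hcard, Nat.coprime_pow_left_iff k.pos, hp.coprime_iff_not_dvd, Ne, CharP.cast_eq_zero_iff F p]

lemma trace_pow_card (x : K) : Algebra.trace F K (x ^ Fintype.card F) = Algebra.trace F K x :=
  Algebra.trace_eq_of_algEquiv (FiniteField.frobeniusAlgEquivOfAlgebraic F K) x

lemma pow_card_sub_one_pow_geomSum_eq_one {x : K} (hx : x ≠ 0) :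
    (x ^ (Fintype.card F - 1)) ^
      ∑ i ∈ Finset.range (Module.finrank F K), Fintype.card F ^ i = 1 := by
  have norm_ne_zero : Algebra.norm F x ≠ 0 := Algebra.norm_ne_zero_iff.mpr hx
  rw [← Nat.card_eq_fintype_card, ← FiniteField.algebraMap_norm_eq_pow_sum, map_pow,
    Nat.card_eq_fintype_card, FiniteField.pow_card_sub_one_eq_one _ norm_ne_zero, map_one]

lemma algebraMap_trace_of_pow_card_eq_self {x : K} (hx : x ^ Fintype.card F = x) :
    algebraMap F K (Algebra.trace F K x) = Module.finrank F K * x := by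
  have pow_card_pow (i : ℕ) : x ^ Fintype.card F ^ i = x := by
    induction i with
    | zero => rw [pow_zero, pow_one]
    | succ i ih => rw [pow_succ, pow_mul, ih, hx]
  simp [FiniteField.algebraMap_trace_eq_sum_pow, pow_card_pow]

lemma trace_ne_zero_iff_coprime_of_pow_card_sub_one_eq_one {x : K}
    (hx : x ^ (Fintype.card F - 1) = 1) :
    Algebra.trace F K x ≠ 0 ↔ (Fintype.card F).Coprime (Module.finrank F K) := by
  have hx0 : x ≠ 0 :=
    (IsUnit.of_pow_eq_one hx (Nat.sub_pos_of_lt Fintype.one_lt_card).ne').ne_zero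
  have x_fixed : x ^ Fintype.card F = x := by
    rw [← pow_sub_one_mul Fintype.card_ne_zero, hx, one_mul]
  rw [← natCast_ne_zero_iff_coprime_card, ← map_ne_zero (algebraMap F K),
    algebraMap_trace_of_pow_card_eq_self x_fixed, mul_ne_zero_iff_right hx0,
    ← map_natCast (algebraMap F K), map_ne_zero]

variable {N : ℕ} {ζ β : K} {s : F}

lemma exists_pow_card_sub_one_eq_one_of_existsUnique_trace_eq (hζ : ζ ^ N = 1)
    (hβ : (β ^ (Fintype.card F - 1)) ^ N = 1)
    (hs : ∃! i : Fin N, Algebra.trace F K (β * ζ ^ (i : ℕ)) = s) :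
    ∃ x : K, x ^ (Fintype.card F - 1) = 1 ∧ Algebra.trace F K x = s := by
  obtain ⟨ω, ⟨hω, trace_ω⟩, ω_unique⟩ :=
    existsUnique_rootOfUnity_of_existsUnique_pow (g := fun ω ↦ Algebra.trace F K (β * ω)) hζ hs
  have hω0 : ω ≠ 0 := (IsUnit.of_pow_eq_one hω hs.exists.choose.pos.ne').ne_zero
  set x := β * ω
  have frobenius_x : β * (x ^ (Fintype.card F - 1) * ω) = x ^ Fintype.card F := by
    rw [mul_left_comm, pow_sub_one_mul Fintype.card_ne_zero]
  refine ⟨x, mul_eq_right₀ hω0 |>.mp (ω_unique _ ⟨?_, ?_⟩), trace_ω⟩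
  · rw [mul_pow, hω, mul_one, mul_pow, mul_pow, hβ, one_mul, pow_right_comm, hω, one_pow]
  · rw [frobenius_x, trace_pow_card, trace_ω]

theorem coprime_card_finrank_iff_ne_zero_of_existsUnique_trace_eq (hζ : ζ ^ N = 1)
    (hβ : (β ^ (Fintype.card F - 1)) ^ N = 1)
    (hs : ∃! i : Fin N, Algebra.trace F K (β * ζ ^ (i : ℕ)) = s) :
    (Fintype.card F).Coprime (Module.finrank F K) ↔ s ≠ 0 := by
  obtain ⟨x, hx, rfl⟩ := exists_pow_card_sub_one_eq_one_of_existsUnique_trace_eq hζ hβ hs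
  exact (trace_ne_zero_iff_coprime_of_pow_card_sub_one_eq_one hx).symm

end FiniteField

lemma cw_apply {q : ℕ} (hq : 1 ≤ q) {F K : Type} [Field F] [Field K] [Algebra F K] (γ : Kˣ) (β : K)
    (i : Fin (q + 1)) :
    cw q F γ β i = Algebra.trace F K (β * ((γ : K) ^ (q - 1)) ^ (i : ℕ)) := by
  rw [cw, ← pow_mul, ← zpow_natCast, Nat.cast_mul, Nat.cast_sub hq, Nat.cast_one]

theorem odd_iff_ne_zero_of_occr_eq_one_general
    (q : ℕ) (F K : Type) [Field F] [Fintype F] [Field K] [Fintype K] [Algebra F K]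
    (hF : Fintype.card F = q) (hK : Fintype.card K = q ^ 2)
    (γ : Kˣ) (β : K) (hβ : β ≠ 0) (s : F) (h : occr s (cw q F γ β) = 1) :
    Odd q ↔ s ≠ 0 := by
  subst hF
  have finrank_eq_two : Module.finrank F K = 2 :=
    Nat.pow_right_injective Fintype.one_lt_card (Module.card_eq_pow_finrank.symm.trans hK)
  have root_of_unity {x : K} (hx : x ≠ 0) :
      (x ^ (Fintype.card F - 1)) ^ (Fintype.card F + 1) = 1 := by
    simpa [finrank_eq_two, Finset.sum_range_succ, add_comm] using
      pow_card_sub_one_pow_geomSum_eq_one (F := F) hx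
  simp only [occr_eq_one_iff_existsUnique, cw_apply Fintype.card_pos] at h
  rw [← Nat.coprime_two_right, ← finrank_eq_two]
  exact coprime_card_finrank_iff_ne_zero_of_existsUnique_trace_eq (root_of_unity γ.ne_zero)
    (root_of_unity hβ) h

/-- If the symbol `s ∈ F_q` occurs exactly once in the codeword `c(β)` (with `β ≠ 0`),
then `q` is odd iff `s ≠ 0`. -/
theorem odd_iff_ne_zero_of_occr_eq_one
    (q : ℕ) (F K : Type) [Field F] [Fintype F] [Field K] [Fintype K] [Algebra F K]
    (hF : Fintype.card F = q) (hK : Fintype.card K = q ^ 2)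
    (γ : Kˣ) (hγ : ∀ x : Kˣ, x ∈ Subgroup.zpowers γ)
    (htr : ∀ x : K, algebraMap F K (Algebra.trace F K x) = x + x ^ q)
    (β : K) (hβ : β ≠ 0) (s : F) (h : occr s (cw q F γ β) = 1) :
    Odd q ↔ s ≠ 0 :=
  odd_iff_ne_zero_of_occr_eq_one_general q F K hF hK γ β hβ s h
end

section
/- In the code C_{(1,q+1,q^2)}, the number of codewords of Hamming weight q−1 is q(q²−1)/2, the number of codewords of Hamming weight q is q²−1, the number of codewords of Hamming weight q+1 is q(q−1)²/2, and together with the zero codeword these account for all q³ codewords (so the minimum Hamming distance of the code is q−1). -/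
open scoped Classical

/-- The cyclic code `C_{(1,q+1,q²)} ⊆ F_q^{q+1}`, consisting of the vectors
`c(α,β)_i = α + Tr(β·γ^{(q−1)i})` for `α ∈ F_q`, `β ∈ F_{q²}`. -/
noncomputable def code (q : ℕ) (F : Type) {K : Type} [Field F] [Fintype F] [Field K]
    [Fintype K] [Algebra F K] (γ : Kˣ) : Finset (Fin (q + 1) → F) :=
  Finset.image (fun p : F × K => fun i : Fin (q + 1) => p.1 + cw q F γ p.2 i) Finset.univ

/-! The code is a three-dimensional MDS code: multiplying `a + b x + b^q x^q = 0` by `x`, where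
`x^(q+1) = 1`, gives the nonzero quadratic equation `b x² + a x + b^q = 0`, so that a nonzero
codeword has at most two zeros. In an MDS code of dimension `k`, any `r ≤ k` coordinates can be
prescribed arbitrarily, so exactly `q^(k-r)` codewords vanish on them. Counting pairs
(codeword, `r`-set of zeros) gives the binomial moments of the number of zeros for
`r = 0, …, k - 1`, and these determine the weight distribution. -/

open Finset Module

section Vectors

variable {n : ℕ} {F : Type}

lemma occr_zero_add_hwt [Zero F] (v : Fin n → F) : occr 0 v + hwt v = n := by
  simpa [occr, hwt] using card_filter_add_card_filter_not (s := univ) (fun i => v i = 0)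

lemma occr_zero_zero [Zero F] : occr 0 (0 : Fin n → F) = n := by
  simp [occr]

lemma choose_occr (s : F) (v : Fin n → F) (r : ℕ) :
    (occr s v).choose r = #{S ∈ powersetCard r univ | ∀ i ∈ S, v i = s} := by
  rw [occr, ← card_powersetCard]
  congr 1
  ext S
  simp [mem_powersetCard, subset_iff, and_comm]

end Vectors

/-- A linear code of length `n` is maximum distance separable if its minimum distance `d` attains
the Singleton bound `d ≤ n - k + 1`, where `k` is its dimension. Only the nontrivial inequality
`n - k + 1 ≤ d` is required, written without subtraction. -/
def IsMDS {n : ℕ} {F : Type} [Field F] (C : Submodule F (Fin n → F)) : Prop :=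
  ∀ c ∈ C, c ≠ 0 → n + 1 ≤ hwt c + finrank F C

/-- The number `A_w` of codewords of weight `w` in a linear code. -/
noncomputable def weightDistribution {n : ℕ} {F : Type} [Field F] [Fintype F]
    (C : Submodule F (Fin n → F)) (w : ℕ) : ℕ :=
  #{c : C | hwt (c : Fin n → F) = w}

/-- The linear map sending a codeword to its restriction to the set `S` of coordinates. -/
def restrictCoords {n : ℕ} {F : Type*} [Field F] (C : Submodule F (Fin n → F))
    (S : Finset (Fin n)) : C →ₗ[F] (S → F) :=
  (LinearMap.funLeft F F (Subtype.val : S → Fin n)).domRestrict C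

section MDS

variable {n : ℕ} {F : Type} [Field F] {C : Submodule F (Fin n → F)}

lemma finrank_code_le_length (C : Submodule F (Fin n → F)) : finrank F C ≤ n := by
  simpa using C.finrank_le

lemma mem_ker_restrictCoords {S : Finset (Fin n)} {c : C} :
    c ∈ LinearMap.ker (restrictCoords C S) ↔ ∀ i ∈ S, (c : Fin n → F) i = 0 := by
  simp [restrictCoords, funext_iff, LinearMap.funLeft_apply]

lemma card_nonzero_occr_eq [Fintype F] (C : Submodule F (Fin n → F)) {j : ℕ} (hj : j < n) :
    #{c ∈ (univ : Finset C).erase 0 | occr 0 c.1 = j} = weightDistribution C (n - j) := by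
  rw [weightDistribution]
  congr 1
  ext c
  have hsum := occr_zero_add_hwt (c : Fin n → F)
  have hne (h : occr 0 (c : Fin n → F) = j) : c ≠ 0 := by
    rintro rfl
    exact hj.ne' (occr_zero_zero.symm.trans h)
  have hiff : occr 0 (c : Fin n → F) = j ↔ hwt (c : Fin n → F) = n - j := by omega
  simpa only [mem_filter, mem_erase, mem_univ, and_true, true_and, ← hiff] using
    and_iff_right_of_imp hne

namespace IsMDS

lemma occr_zero_lt_finrank (hC : IsMDS C) {c : C} (hc : c ≠ 0) :
    occr 0 (c : Fin n → F) < finrank F C := by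
  have := hC c c.2 (by simpa using hc)
  have := occr_zero_add_hwt (c : Fin n → F)
  omega

lemma restrictCoords_injective (hC : IsMDS C) {S : Finset (Fin n)} (hS : finrank F C ≤ #S) :
    Function.Injective (restrictCoords C S) := by
  rw [← LinearMap.ker_eq_bot, LinearMap.ker_eq_bot']
  intro c hc
  by_contra hne
  have hzeros : #S ≤ occr 0 (c : Fin n → F) :=
    card_le_card fun i hi => by simpa using mem_ker_restrictCoords.1 hc i hi
  exact (hC.occr_zero_lt_finrank hne).not_ge (hS.trans hzeros)

lemma restrictCoords_surjective (hC : IsMDS C) {S : Finset (Fin n)} (hS : #S ≤ finrank F C) :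
    Function.Surjective (restrictCoords C S) := by
  obtain ⟨T, hST, hT⟩ := exists_superset_card_eq hS (by simpa using finrank_code_le_length C)
  have hsurjT : Function.Surjective (restrictCoords C T) :=
    (LinearMap.injective_iff_surjective_of_finrank_eq_finrank (by simp [hT])).1
      (hC.restrictCoords_injective hT.ge)
  exact (LinearMap.funLeft_surjective_of_injective F F _ (Set.inclusion_injective hST)).comp hsurjT

variable [Fintype F]

lemma card_forall_mem_eq_zero (hC : IsMDS C) {S : Finset (Fin n)} (hS : #S ≤ finrank F C) :
    #{c : C | ∀ i ∈ S, (c : Fin n → F) i = 0} = Fintype.card F ^ (finrank F C - #S) := by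
  have hrank : finrank F (LinearMap.ker (restrictCoords C S)) = finrank F C - #S := by
    have := (restrictCoords C S).finrank_range_add_finrank_ker
    rw [LinearMap.range_eq_top.2 (hC.restrictCoords_surjective hS), finrank_top,
      finrank_fintype_fun_eq_card, Fintype.card_coe] at this
    omega
  rw [← hrank, ← Module.card_eq_pow_finrank (K := F) (V := LinearMap.ker (restrictCoords C S)),
    ← Fintype.card_subtype]
  exact Fintype.card_congr (Equiv.subtypeEquivRight fun _ => mem_ker_restrictCoords.symm)

lemma sum_choose_occr_zero (hC : IsMDS C) {r : ℕ} (hr : r ≤ finrank F C) :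
    ∑ c : C, (occr 0 (c : Fin n → F)).choose r =
      n.choose r * Fintype.card F ^ (finrank F C - r) := by
  calc ∑ c : C, (occr 0 (c : Fin n → F)).choose r
      = ∑ c : C, #{S ∈ powersetCard r univ | ∀ i ∈ S, (c : Fin n → F) i = 0} := by
        simp only [choose_occr]
    _ = ∑ S ∈ powersetCard r univ, #{c : C | ∀ i ∈ S, (c : Fin n → F) i = 0} :=
        sum_card_bipartiteAbove_eq_sum_card_bipartiteBelow _
    _ = ∑ _S ∈ powersetCard r (univ : Finset (Fin n)), Fintype.card F ^ (finrank F C - r) := by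
        refine sum_congr rfl fun S hS => ?_
        obtain rfl := (mem_powersetCard.1 hS).2
        exact hC.card_forall_mem_eq_zero hr
    _ = n.choose r * Fintype.card F ^ (finrank F C - r) := by simp

theorem sum_weightDistribution_mul_choose (hC : IsMDS C) {r : ℕ} (hr : r ≤ finrank F C) :
    n.choose r + ∑ j ∈ range (finrank F C), weightDistribution C (n - j) * j.choose r =
      n.choose r * Fintype.card F ^ (finrank F C - r) := by
  rw [← hC.sum_choose_occr_zero hr, ← add_sum_erase univ _ (mem_univ (0 : C)),
    Submodule.coe_zero, occr_zero_zero]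
  congr 1
  have hmaps : ∀ c ∈ univ.erase (0 : C), occr 0 (c : Fin n → F) ∈ range (finrank F C) :=
    fun c hc => mem_range.2 (hC.occr_zero_lt_finrank (ne_of_mem_erase hc))
  rw [← sum_fiberwise_of_maps_to hmaps]
  refine sum_congr rfl fun j hj => ?_
  rw [← card_nonzero_occr_eq C ((mem_range.1 hj).trans_le (finrank_code_le_length C)),
    ← smul_eq_mul, ← sum_const]
  refine sum_congr rfl fun c hc => ?_
  rw [(mem_filter.1 hc).2]

theorem weightDistribution_of_finrank_eq_three (hC : IsMDS C) (h3 : finrank F C = 3) :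
    (weightDistribution C (n - 2) : ℚ) = n * (n - 1) / 2 * (Fintype.card F - 1) ∧
    (weightDistribution C (n - 1) : ℚ) = n * (Fintype.card F - 1) * (Fintype.card F + 2 - n) ∧
    1 + weightDistribution C (n - 2) + weightDistribution C (n - 1) + weightDistribution C n =
      Fintype.card F ^ 3 := by
  have moment {r : ℕ} (hr : r ≤ 3) := hC.sum_weightDistribution_mul_choose (hr.trans_eq h3.symm)
  simp only [h3, sum_range_succ, range_zero, sum_empty, zero_add, tsub_zero] at moment
  have h₀ := moment (r := 0) (by norm_num)
  have h₁ := moment (r := 1) (by norm_num)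
  have h₂ := congrArg (Nat.cast (R := ℚ)) (moment (r := 2) (by norm_num))
  norm_num [Nat.cast_choose_two] at h₀ h₁ h₂
  replace h₁ := congrArg (Nat.cast (R := ℚ)) h₁
  push_cast at h₁
  refine ⟨by linear_combination h₂, by linear_combination h₁ - 2 * h₂, by omega⟩

theorem weightDistribution_of_length_eq_card_add_one {q : ℕ} {C : Submodule F (Fin (q + 1) → F)}
    (hC : IsMDS C) (hF : Fintype.card F = q) (h3 : finrank F C = 3) :
    (weightDistribution C (q - 1) : ℚ) = q * ((q : ℚ) ^ 2 - 1) / 2 ∧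
    weightDistribution C q = q ^ 2 - 1 ∧
    (weightDistribution C (q + 1) : ℚ) = q * ((q : ℚ) - 1) ^ 2 / 2 ∧
    1 + weightDistribution C (q - 1) + weightDistribution C q + weightDistribution C (q + 1) =
      q ^ 3 := by
  have hq : 1 < q := hF ▸ Fintype.one_lt_card
  obtain ⟨hA₂, hA₁, htotal⟩ := hC.weightDistribution_of_finrank_eq_three h3
  rw [show q + 1 - 2 = q - 1 by omega, hF] at hA₂ htotal
  rw [Nat.add_sub_cancel] at hA₁ htotal
  rw [hF] at hA₁
  push_cast at hA₂ hA₁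
  have htotal' := congrArg (Nat.cast (R := ℚ)) htotal
  push_cast at htotal'
  refine ⟨by linear_combination hA₂, ?_, by linear_combination htotal' - hA₂ - hA₁, htotal⟩
  rw [← Nat.cast_inj (R := ℚ), Nat.cast_sub (Nat.one_le_pow _ _ (by omega))]
  push_cast
  linear_combination hA₁

end IsMDS

lemma finrank_range_of_occr_zero_lt {V : Type*} [AddCommGroup V] [Module F V]
    (φ : V →ₗ[F] (Fin n → F)) (hn : finrank F V ≤ n)
    (hφ : ∀ v ≠ 0, occr 0 (φ v) < finrank F V) : finrank F (LinearMap.range φ) = finrank F V := by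
  refine LinearMap.finrank_range_of_inj (LinearMap.ker_eq_bot.1 (LinearMap.ker_eq_bot'.2 ?_))
  intro v hv
  by_contra hne
  have := hφ v hne
  rw [hv, occr_zero_zero] at this
  omega

lemma isMDS_range_of_occr_zero_lt {V : Type*} [AddCommGroup V] [Module F V]
    (φ : V →ₗ[F] (Fin n → F)) (hn : finrank F V ≤ n)
    (hφ : ∀ v ≠ 0, occr 0 (φ v) < finrank F V) : IsMDS (LinearMap.range φ) := by
  rintro _ ⟨v, rfl⟩ hv
  have hlt := hφ v (by rintro rfl; exact hv (map_zero φ))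
  have := occr_zero_add_hwt (φ v)
  have := finrank_range_of_occr_zero_lt φ hn hφ
  omega

end MDS

lemma card_le_two_of_quadratic_eq_zero {K : Type*} [Field K] {a b c : K} (h : a ≠ 0 ∨ b ≠ 0)
    {s : Finset K} (hs : ∀ x ∈ s, a * x ^ 2 + b * x + c = 0) : #s ≤ 2 := by
  open Polynomial in
  set P : K[X] := C a * X ^ 2 + C b * X + C c with hP
  have hP0 : P ≠ 0 := by
    intro h0
    have ha : P.coeff 2 = a := by simp [hP]
    have hb : P.coeff 1 = b := by simp [hP, coeff_C]
    simp only [h0, coeff_zero] at ha hb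
    exact h.elim (· ha.symm) (· hb.symm)
  have hroots : s.val ⊆ P.roots := fun x hx =>
    (mem_roots hP0).2 (by simpa [hP] using hs x hx)
  exact (card_le_degree_of_subset_roots hroots).trans natDegree_quadratic_le

section Trace

variable {q : ℕ} {F K : Type*} [Field F] [Field K] [Algebra F K]

lemma finrank_eq_two_of_card_eq_sq [Fintype F] [Fintype K]
    (hK : Fintype.card K = Fintype.card F ^ 2) : finrank F K = 2 :=
  Nat.pow_right_injective Fintype.one_lt_card
    ((Module.card_eq_pow_finrank (K := F) (V := K)).symm.trans hK)

lemma quadratic_eq_zero_of_trace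
    (htr : ∀ x : K, algebraMap F K (Algebra.trace F K x) = x + x ^ q) {a : F} {b x : K}
    (hx : x ^ (q + 1) = 1) (h : a + Algebra.trace F K (b * x) = 0) :
    b * x ^ 2 + algebraMap F K a * x + b ^ q = 0 := by
  have h' := congrArg (algebraMap F K) h
  rw [map_add, htr, map_zero, mul_pow] at h'
  linear_combination x * h' - b ^ q * hx

end Trace

/-- The encoder `(a, b) ↦ (a + Tr(b u_i))_i` attached to evaluation points `u_i ∈ K`. -/
noncomputable def affineTrace {n : ℕ} (F : Type*) {K : Type*} [Field F] [Field K] [Algebra F K]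
    (u : Fin n → K) : F × K →ₗ[F] (Fin n → F) :=
  LinearMap.pi fun i =>
    LinearMap.fst F F K + Algebra.trace F K ∘ₗ LinearMap.mulRight F (u i) ∘ₗ LinearMap.snd F F K

lemma occr_zero_affineTrace_le_two {n q : ℕ} {F : Type} {K : Type*} [Field F] [Field K]
    [Algebra F K]
    (htr : ∀ x : K, algebraMap F K (Algebra.trace F K x) = x + x ^ q) {u : Fin n → K}
    (hu : Function.Injective u) (hpow : ∀ i, u i ^ (q + 1) = 1) {p : F × K} (hp : p ≠ 0) :
    occr 0 (affineTrace F u p) ≤ 2 := by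
  obtain ⟨a, b⟩ := p
  rw [occr, ← card_image_of_injective _ hu]
  refine card_le_two_of_quadratic_eq_zero (a := b) (b := algebraMap F K a) (c := b ^ q) ?_ ?_
  · contrapose! hp
    simpa [and_comm] using hp
  · simp only [mem_image, mem_filter, mem_univ, true_and]
    rintro _ ⟨i, hi, rfl⟩
    exact quadratic_eq_zero_of_trace htr (hpow i) hi

section EvalPoint

variable {q : ℕ} {K : Type*} [Field K]

/-- The evaluation points `γ^((q-1)i)` of `C_{(1,q+1,q²)}`, with the integer exponent of `cw`. -/
def evalPoint (q : ℕ) (γ : Kˣ) (i : Fin (q + 1)) : K :=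
  (γ : K) ^ (((q : ℤ) - 1) * ((i : ℕ) : ℤ))

lemma evalPoint_eq_pow (hq : 1 ≤ q) (γ : Kˣ) (i : Fin (q + 1)) :
    evalPoint q γ i = ((γ : K) ^ (q - 1)) ^ (i : ℕ) := by
  rw [evalPoint, ← Nat.cast_one, ← Nat.cast_sub hq, ← Nat.cast_mul, zpow_natCast, pow_mul]

lemma isPrimitiveRoot_pow_sub_one {γ : K} (hq : 1 < q) (hγ : IsPrimitiveRoot γ (q ^ 2 - 1)) :
    IsPrimitiveRoot (γ ^ (q - 1)) (q + 1) := by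
  have hfactor : q ^ 2 - 1 = (q - 1) * (q + 1) := by
    simpa [mul_comm] using Nat.sq_sub_sq q 1
  refine hγ.pow ?_ hfactor
  rw [hfactor]
  exact Nat.mul_pos (Nat.sub_pos_of_lt hq) q.succ_pos

lemma isPrimitiveRoot_of_forall_mem_zpowers [Fintype K] {γ : Kˣ}
    (hγ : ∀ x : Kˣ, x ∈ Subgroup.zpowers γ) :
    IsPrimitiveRoot (γ : K) (Fintype.card K - 1) := by
  rw [IsPrimitiveRoot.coe_units_iff, ← Fintype.card_units, ← Nat.card_eq_fintype_card,
    ← orderOf_eq_card_of_forall_mem_zpowers hγ]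
  exact IsPrimitiveRoot.orderOf γ

lemma evalPoint_injective {γ : Kˣ} (hq : 1 < q) (hγ : IsPrimitiveRoot (γ : K) (q ^ 2 - 1)) :
    Function.Injective (evalPoint q γ) := by
  intro i j hij
  rw [evalPoint_eq_pow hq.le, evalPoint_eq_pow hq.le] at hij
  exact Fin.ext ((isPrimitiveRoot_pow_sub_one hq hγ).pow_inj i.2 j.2 hij)

lemma evalPoint_pow {γ : Kˣ} (hq : 1 < q) (hγ : IsPrimitiveRoot (γ : K) (q ^ 2 - 1))
    (i : Fin (q + 1)) : evalPoint q γ i ^ (q + 1) = 1 := by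
  rw [evalPoint_eq_pow hq.le, pow_right_comm, (isPrimitiveRoot_pow_sub_one hq hγ).pow_eq_one,
    one_pow]

end EvalPoint

section LinearCode

variable {q : ℕ} {F K : Type} [Field F] [Field K] [Algebra F K]

/-- The code `C_{(1,q+1,q²)}` as a linear subspace; `code` is its underlying finset. -/
noncomputable def linearCode (q : ℕ) (F : Type) {K : Type*} [Field F] [Field K] [Algebra F K]
    (γ : Kˣ) : Submodule F (Fin (q + 1) → F) :=
  LinearMap.range (affineTrace F (evalPoint q γ))

lemma isMDS_and_finrank_linearCode (hq : 1 < q) {γ : Kˣ} (hγ : IsPrimitiveRoot (γ : K) (q ^ 2 - 1))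
    (htr : ∀ x : K, algebraMap F K (Algebra.trace F K x) = x + x ^ q) (h2 : finrank F K = 2) :
    IsMDS (linearCode q F γ) ∧ finrank F (linearCode q F γ) = 3 := by
  have : Module.Finite F K := Module.finite_of_finrank_pos (by omega)
  have h3 : finrank F (F × K) = 3 := by rw [finrank_prod, finrank_self, h2]
  have hlen : finrank F (F × K) ≤ q + 1 := by omega
  have hzeros : ∀ p ≠ 0, occr 0 (affineTrace F (evalPoint q γ) p) < finrank F (F × K) :=
    fun p hp => h3 ▸ Nat.lt_succ_of_le
      (occr_zero_affineTrace_le_two htr (evalPoint_injective hq hγ) (evalPoint_pow hq hγ) hp)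
  exact ⟨isMDS_range_of_occr_zero_lt _ hlen hzeros,
    (finrank_range_of_occr_zero_lt _ hlen hzeros).trans h3⟩

variable [Fintype F] [Fintype K]

lemma mem_code_iff {γ : Kˣ} {v : Fin (q + 1) → F} : v ∈ code q F γ ↔ v ∈ linearCode q F γ := by
  simp only [code, mem_image, mem_univ, true_and]
  rfl

lemma code_eq_map (γ : Kˣ) :
    code q F γ = univ.map (Function.Embedding.subtype (· ∈ linearCode q F γ)) := by
  ext v
  simp [mem_code_iff]

lemma card_filter_hwt_code (γ : Kˣ) (w : ℕ) :
    #{v ∈ code q F γ | hwt v = w} = weightDistribution (linearCode q F γ) w := by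
  rw [code_eq_map, filter_map, card_map]
  rfl

lemma card_code (γ : Kˣ) :
    #(code q F γ) = Fintype.card F ^ finrank F (linearCode q F γ) := by
  rw [code_eq_map, card_map, card_univ, Module.card_eq_pow_finrank (K := F)]

end LinearCode

/-- The weight distribution of `C_{(1,q+1,q²)}`: there are `q(q²−1)/2` codewords of
weight `q−1`, `q²−1` codewords of weight `q`, `q(q−1)²/2` codewords of weight `q+1`,
and together with the zero codeword these account for all `q³` codewords (so the
minimum Hamming distance is `q−1`). -/
theorem code_weight_distribution
    (q : ℕ) (F K : Type) [Field F] [Fintype F] [Field K] [Fintype K] [Algebra F K]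
    (hF : Fintype.card F = q) (hK : Fintype.card K = q ^ 2)
    (γ : Kˣ) (hγ : ∀ x : Kˣ, x ∈ Subgroup.zpowers γ)
    (htr : ∀ x : K, algebraMap F K (Algebra.trace F K x) = x + x ^ q) :
    ((Finset.filter (fun v => hwt v = q - 1) (code q F γ)).card : ℚ)
        = q * ((q : ℚ) ^ 2 - 1) / 2 ∧
    (Finset.filter (fun v => hwt v = q) (code q F γ)).card = q ^ 2 - 1 ∧
    ((Finset.filter (fun v => hwt v = q + 1) (code q F γ)).card : ℚ)
        = q * ((q : ℚ) - 1) ^ 2 / 2 ∧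
    1 + (Finset.filter (fun v => hwt v = q - 1) (code q F γ)).card
      + (Finset.filter (fun v => hwt v = q) (code q F γ)).card
      + (Finset.filter (fun v => hwt v = q + 1) (code q F γ)).card
      = (code q F γ).card ∧
    (code q F γ).card = q ^ 3 ∧
    (∀ v ∈ code q F γ, v ≠ 0 → q - 1 ≤ hwt v) ∧
    (∃ v ∈ code q F γ, hwt v = q - 1) := by
  have hq : 1 < q := hF ▸ Fintype.one_lt_card
  have hγ' : IsPrimitiveRoot (γ : K) (q ^ 2 - 1) := hK ▸ isPrimitiveRoot_of_forall_mem_zpowers hγ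
  have h2 : finrank F K = 2 := finrank_eq_two_of_card_eq_sq (hF.symm ▸ hK)
  obtain ⟨hMDS, h3⟩ := isMDS_and_finrank_linearCode hq hγ' htr h2
  obtain ⟨hA₂, hA₁, hA₀, htotal⟩ := hMDS.weightDistribution_of_length_eq_card_add_one hF h3
  have hcard : #(code q F γ) = q ^ 3 := by rw [card_code, h3, hF]
  simp only [← card_filter_hwt_code] at hA₂ hA₁ hA₀ htotal
  refine ⟨hA₂, hA₁, hA₀, htotal.trans hcard.symm, hcard, fun v hv hv0 => ?_, ?_⟩
  · have := hMDS v (mem_code_iff.1 hv) hv0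
    omega
  · have hpos : 0 < #{v ∈ code q F γ | hwt v = q - 1} := by
      have : (1 : ℚ) < q := mod_cast hq
      have : (0 : ℚ) < (q : ℚ) ^ 2 - 1 := by nlinarith
      rw [← Nat.cast_pos (α := ℚ), hA₂]
      positivity
    simpa only [card_pos, Finset.Nonempty, mem_filter] using hpos
end
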